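/- arXiv:2312.03778 — 2 statements merged into one kernel-verified Lean document; each statement's English description precedes it below -/
import Mathlib

section
/- Let q ∈ (1,2], let H be an n×n contraction (H*H ≤ I), and let L be an n×n positive definite matrix. Then the function h_q(A) = log_q(Tr[(I − H*H + (q−1)L + H* A^{q−1} H)^{1/(q−1)}]) is concave on n×n positive definite matrices A. -/
open Matrix ComplexOrder

/-- Matrix logarithm of a (positive definite) Hermitian matrix, via functional calculus. -/
noncomputable def mlog {n : ℕ} (A : Matrix (Fin n) (Fin n) ℂ) : Matrix (Fin n) (Fin n) ℂ :=
  cfc Real.log A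

/-- Matrix exponential of a Hermitian matrix, via functional calculus. -/
noncomputable def mexp {n : ℕ} (A : Matrix (Fin n) (Fin n) ℂ) : Matrix (Fin n) (Fin n) ℂ :=
  cfc Real.exp A

/-- Real power of a (positive definite) Hermitian matrix, via functional calculus. -/
noncomputable def mpow {n : ℕ} (A : Matrix (Fin n) (Fin n) ℂ) (p : ℝ) : Matrix (Fin n) (Fin n) ℂ :=
  cfc (fun x : ℝ => x ^ p) A

/-- Deformed logarithm `log_q x = (x^(q-1) - 1)/(q-1)`. -/
noncomputable def logq (q x : ℝ) : ℝ := (x ^ (q - 1) - 1) / (q - 1)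

/-- Deformed exponential `exp_q x = (1 + (q-1)x)^(1/(q-1))`, with `exp_1 = exp`. -/
noncomputable def expq (q x : ℝ) : ℝ :=
  if q = 1 then Real.exp x else (1 + (q - 1) * x) ^ (1 / (q - 1))

/-- Deformed logarithm of a positive definite matrix, via functional calculus. -/
noncomputable def mlogq {n : ℕ} (q : ℝ) (A : Matrix (Fin n) (Fin n) ℂ) :
    Matrix (Fin n) (Fin n) ℂ :=
  cfc (logq q) A

/-- Deformed exponential of a Hermitian matrix, via functional calculus. -/
noncomputable def mexpq {m : ℕ} (q : ℝ) (A : Matrix (Fin m) (Fin m) ℂ) :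
    Matrix (Fin m) (Fin m) ℂ :=
  cfc (expq q) A

/-- Real part of the trace. -/
noncomputable def trRe {n : ℕ} (M : Matrix (Fin n) (Fin n) ℂ) : ℝ := (Matrix.trace M).re

/-- The reduced relative entropy `S_H(A | B) = Tr[A log A - H* A H log B - A + B]`. -/
noncomputable def SH {n : ℕ} (H A B : Matrix (Fin n) (Fin n) ℂ) : ℝ :=
  trRe (A * mlog A - Hᴴ * A * H * mlog B - A + B)

/-- The reduced Tsallis relative entropy
`S_{H,q}(A | B) = Tr[A^(2-q) log_q A - H* A^(2-q) H log_q B - A + B]`. -/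
noncomputable def STq {n : ℕ} (H : Matrix (Fin n) (Fin n) ℂ) (q : ℝ)
    (A B : Matrix (Fin n) (Fin n) ℂ) : ℝ :=
  trRe (mpow A (2 - q) * mlogq q A - Hᴴ * mpow A (2 - q) * H * mlogq q B - A + B)


/-- The trace functional φ_q(A) = Tr[(I - H*H + (q-1)L + H* A^(q-1) H)^(1/(q-1))]. -/
noncomputable def phiq {n : ℕ} (q : ℝ) (H L A : Matrix (Fin n) (Fin n) ℂ) : ℝ :=
  trRe (mpow (1 - Hᴴ * H + (q - 1) • L + Hᴴ * mpow A (q - 1) * H) (1 / (q - 1)))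

/-!
Put `p = q - 1 ∈ (0, 1]`. The parallel sum of two positive operators is an infimum of linear
functionals, hence jointly concave, and `x ^ p * y ^ (1 - p)` is an average over `t > 0` of
parallel sums of `x / t` and `y`; applied to the commuting operators of left multiplication by `A`
and right multiplication by `B`, this yields Lieb's concavity theorem for
`(A, B) ↦ Tr K* A ^ p K B ^ (1 - p)`. By Young's trace inequality `p Tr M ^ (1 / p)` is the maximum
over `B ≥ 0` of `Tr M B ^ (1 - p) - (1 - p) Tr B`. For `M = C + H* A ^ p H` the expression under the
maximum is jointly concave in `(A, B)` by Lieb's theorem, so its partial maximum is concave in `A`,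
which is a form of Epstein's theorem. Finally `log_q` is concave and increasing when `1 < q ≤ 2`.
-/

open scoped MatrixOrder

section Concavity

variable {E F ι : Type*} [AddCommGroup E] [Module ℝ E] [AddCommGroup F] [Module ℝ F]

lemma concaveOn_ciInf [Nonempty ι] {s : Set E} {G : ι → E → ℝ} (hG : ∀ i, ConcaveOn ℝ s (G i))
    (hbdd : ∀ x ∈ s, BddBelow (Set.range fun i => G i x)) :
    ConcaveOn ℝ s fun x => ⨅ i, G i x := by
  refine ⟨(hG (Classical.arbitrary ι)).1, fun x hx y hy a b ha hb hab => le_ciInf fun i => ?_⟩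
  calc a • (⨅ i, G i x) + b • (⨅ i, G i y)
      ≤ a • G i x + b • G i y := by
        gcongr
        · exact ciInf_le (hbdd x hx) i
        · exact ciInf_le (hbdd y hy) i
    _ ≤ G i (a • x + b • y) := (hG i).2 hx hy ha hb hab

lemma concaveOn_of_isGreatest_image {s : Set E} {t : Set F} {G : E × F → ℝ} {f : E → ℝ}
    (hG : ConcaveOn ℝ (s ×ˢ t) G)
    (hf : ∀ x ∈ s, IsGreatest ((fun y => G (x, y)) '' t) (f x)) : ConcaveOn ℝ s f := by
  have hattained (x) (hx : x ∈ s) : ∃ y, (x, y) ∈ s ×ˢ t ∧ G (x, y) = f x := by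
    obtain ⟨y, hy, hxy⟩ := (hf x hx).1
    exact ⟨y, ⟨hx, hy⟩, hxy⟩
  choose! u hu huf using hattained
  have hmem {x y : E} (hx : x ∈ s) (hy : y ∈ s) {a b : ℝ} (ha : 0 ≤ a) (hb : 0 ≤ b)
      (hab : a + b = 1) : (a • x + b • y, a • u x + b • u y) ∈ s ×ˢ t :=
    hG.1 (hu x hx) (hu y hy) ha hb hab
  refine ⟨fun x hx y hy a b ha hb hab => (hmem hx hy ha hb hab).1,
    fun x hx y hy a b ha hb hab => ?_⟩
  calc a • f x + b • f y = a • G (x, u x) + b • G (y, u y) := by rw [huf x hx, huf y hy]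
    _ ≤ G (a • (x, u x) + b • (y, u y)) := hG.2 (hu x hx) (hu y hy) ha hb hab
    _ ≤ f (a • x + b • y) :=
      (hf _ (hmem hx hy ha hb hab).1).2 ⟨_, (hmem hx hy ha hb hab).2, rfl⟩

end Concavity

section ScalarParallelSum

lemma isLeast_range_mul_norm_sq_add_mul_norm_sub_sq {E : Type*} [NormedAddCommGroup E]
    [NormedSpace ℝ E] {a b : ℝ} (ha : 0 ≤ a) (hb : 0 ≤ b) (z : E) :
    IsLeast (Set.range fun x : E => a * ‖x‖ ^ 2 + b * ‖z - x‖ ^ 2)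
      (a * b / (a + b) * ‖z‖ ^ 2) := by
  rcases (add_nonneg ha hb).eq_or_lt with hab | hab
  · obtain ⟨rfl, rfl⟩ := (add_eq_zero_iff_of_nonneg ha hb).1 hab.symm
    simp
  constructor
  · refine ⟨(b / (a + b)) • z, ?_⟩
    have hz : z - (b / (a + b)) • z = (a / (a + b)) • z := by
      rw [sub_eq_iff_eq_add, ← add_smul, ← add_div, div_self hab.ne', one_smul]
    simp only [hz, norm_smul, Real.norm_eq_abs, mul_pow, sq_abs]
    field_simp
    ring
  · rintro _ ⟨x, rfl⟩
    have hz : ‖z‖ ≤ ‖x‖ + ‖z - x‖ := norm_le_norm_add_norm_sub' z x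
    calc a * b / (a + b) * ‖z‖ ^ 2 ≤ a * b / (a + b) * (‖x‖ + ‖z - x‖) ^ 2 := by gcongr
      _ ≤ a * ‖x‖ ^ 2 + b * ‖z - x‖ ^ 2 := by
        rw [div_mul_eq_mul_div, div_le_iff₀ hab]
        linarith [sq_nonneg (a * ‖x‖ - b * ‖z - x‖)]

open MeasureTheory in
lemma exists_measure_rpow_mul_rpow_one_sub_eq_integral {p : ℝ} (hp : p ∈ Set.Ioo (0 : ℝ) 1) :
    ∃ μ : Measure ℝ, ∀ a b : ℝ, 0 ≤ a → 0 ≤ b →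
      IntegrableOn (fun t => t ^ (p - 1) * (t⁻¹ * a * b / (t⁻¹ * a + b))) (Set.Ioi 0) μ ∧
      a ^ p * b ^ (1 - p) =
        ∫ t in Set.Ioi 0, t ^ (p - 1) * (t⁻¹ * a * b / (t⁻¹ * a + b)) ∂μ := by
  obtain ⟨μ, hμ⟩ := Real.exists_measure_rpow_eq_integral_rpowIntegrand₀₁ hp
  refine ⟨μ, fun a b ha hb => ?_⟩
  rcases hb.eq_or_lt with rfl | hb
  · simp [Real.zero_rpow (sub_pos.2 hp.2).ne']
  have hab : 0 ≤ a / b := by positivity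
  have hintegrand : Set.EqOn (fun t => b * Real.rpowIntegrand₀₁ p t (a / b))
      (fun t => t ^ (p - 1) * (t⁻¹ * a * b / (t⁻¹ * a + b))) (Set.Ioi 0) := by
    intro t (ht : 0 < t)
    simp only [Real.rpowIntegrand₀₁_eq_pow_div hp ht.le hab]
    field_simp
    ring
  obtain ⟨hint, heq⟩ := hμ (a / b) hab
  refine ⟨IntegrableOn.congr_fun (hint.const_mul b) hintegrand measurableSet_Ioi, ?_⟩
  rw [← setIntegral_congr_fun measurableSet_Ioi hintegrand, integral_const_mul, ← heq,
    Real.div_rpow ha hb.le, Real.rpow_sub hb, Real.rpow_one]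
  ring

end ScalarParallelSum

section DeformedLog

variable {q : ℝ}

lemma monotoneOn_logq (hq : 1 < q) : MonotoneOn (logq q) (Set.Ici 0) := by
  intro x (hx : 0 ≤ x) y _ hxy
  have hq' : 0 ≤ q - 1 := sub_nonneg.2 hq.le
  exact div_le_div_of_nonneg_right (sub_le_sub_right (Real.rpow_le_rpow hx hxy hq') 1) hq'

lemma concaveOn_logq (hq : q ∈ Set.Ioc (1 : ℝ) 2) : ConcaveOn ℝ (Set.Ici 0) (logq q) := by
  have hq' : 0 ≤ q - 1 := sub_nonneg.2 hq.1.le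
  refine (((Real.concaveOn_rpow hq' (by linarith [hq.2])).add_const (-1)).smul
    (inv_nonneg.2 hq')).congr fun x _ => ?_
  simp only [logq, Pi.add_apply, smul_eq_mul]
  ring

end DeformedLog

section Matrices

variable {m n 𝕜 : Type*} [Fintype m] [Fintype n] [RCLike 𝕜]

section Trace

/-- The real part of the trace, as a real-linear functional; over `ℂ` it is `trRe`. -/
noncomputable def reTrace : Matrix n n 𝕜 →ₗ[ℝ] ℝ :=
  RCLike.reLm ∘ₗ traceLinearMap n ℝ 𝕜

lemma reTrace_mul_comm (A : Matrix m n 𝕜) (B : Matrix n m 𝕜) :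
    reTrace (A * B) = reTrace (B * A) :=
  congrArg RCLike.re (trace_mul_comm A B)

lemma reTrace_nonneg {A : Matrix n n 𝕜} (hA : 0 ≤ A) : 0 ≤ reTrace A :=
  (RCLike.nonneg_iff.1 hA.posSemidef.trace_nonneg).1

lemma reTrace_conjTranspose_mul_diagonal_mul_diagonal [DecidableEq m] [DecidableEq n]
    (d : m → ℝ) (e : n → ℝ) (W : Matrix m n 𝕜) :
    reTrace (Wᴴ * diagonal (fun i => (d i : 𝕜)) * W * diagonal (fun j => (e j : 𝕜))) =
      ∑ i, ∑ j, d i * e j * ‖W i j‖ ^ 2 := by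
  have hentry (i : m) (j : n) :
      star (W i j) * (d i : 𝕜) * W i j * (e j : 𝕜) = ((d i * e j * ‖W i j‖ ^ 2 : ℝ) : 𝕜) := by
    rw [mul_right_comm (star _), RCLike.star_def, RCLike.conj_mul]
    push_cast
    ring
  rw [Finset.sum_comm]
  change RCLike.re (trace _) = _
  simp only [trace, diag_apply, mul_diagonal, mul_apply (N := W), conjTranspose_apply,
    Finset.sum_mul, hentry, map_sum, RCLike.ofReal_re]

end Trace

section ParallelSum

/-- The quadratic form at `K` of the parallel sum of the two commuting operators `X ↦ A * X` and
`X ↦ X * B`. The infimum is over a set bounded below, hence not a junk value, when `0 ≤ A` and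
`0 ≤ B`. -/
noncomputable def parallelSumForm (K : Matrix m n 𝕜) (A : Matrix m m 𝕜) (B : Matrix n n 𝕜) : ℝ :=
  ⨅ X : Matrix m n 𝕜, (reTrace (Xᴴ * A * X) + reTrace ((K - X) * B * (K - X)ᴴ))

lemma concaveOn_reTrace_conj_add_reTrace_conj (X Y : Matrix m n 𝕜)
    {s : Set (Matrix m m 𝕜 × Matrix n n 𝕜)} (hs : Convex ℝ s) :
    ConcaveOn ℝ s fun P => reTrace (Xᴴ * P.1 * X) + reTrace (Y * P.2 * Yᴴ) := by
  refine ⟨hs, fun P _ Q _ a b _ _ _ => le_of_eq ?_⟩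
  simp only [Prod.fst_add, Prod.snd_add, Prod.smul_fst, Prod.smul_snd, Matrix.mul_add,
    Matrix.add_mul, Matrix.mul_smul, Matrix.smul_mul, map_add, map_smul, smul_add]
  ring

lemma concaveOn_parallelSumForm (K : Matrix m n 𝕜) :
    ConcaveOn ℝ (Set.Ici (0 : Matrix m m 𝕜) ×ˢ Set.Ici (0 : Matrix n n 𝕜)) fun P =>
      parallelSumForm K P.1 P.2 := by
  refine concaveOn_ciInf (fun X => concaveOn_reTrace_conj_add_reTrace_conj X (K - X)
    ((convex_Ici 0).prod (convex_Ici 0))) ?_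
  rintro ⟨A, B⟩ ⟨hA, hB⟩
  refine ⟨0, ?_⟩
  rintro _ ⟨X, rfl⟩
  exact add_nonneg
    (reTrace_nonneg ((LE.le.posSemidef hA).conjTranspose_mul_mul_same X).nonneg)
    (reTrace_nonneg ((LE.le.posSemidef hB).mul_mul_conjTranspose_same (K - X)).nonneg)

lemma concaveOn_parallelSumForm_smul_left (K : Matrix m n 𝕜) {c : ℝ} (hc : 0 ≤ c) :
    ConcaveOn ℝ (Set.Ici (0 : Matrix m m 𝕜) ×ˢ Set.Ici (0 : Matrix n n 𝕜)) fun P =>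
      parallelSumForm K (c • P.1) P.2 := by
  let scale : Matrix m m 𝕜 × Matrix n n 𝕜 →ₗ[ℝ] Matrix m m 𝕜 × Matrix n n 𝕜 :=
    LinearMap.prodMap (c • LinearMap.id) LinearMap.id
  refine ((concaveOn_parallelSumForm K).comp_linearMap scale).subset ?_
    ((convex_Ici 0).prod (convex_Ici 0))
  rintro P ⟨hA, hB⟩
  exact ⟨show 0 ≤ c • P.1 from smul_nonneg hc hA, hB⟩

end ParallelSum

variable [DecidableEq m]

section Nonneg

lemma cfc_rpow_nonneg {A : Matrix m m 𝕜} (hA : 0 ≤ A) (p : ℝ) :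
    0 ≤ cfc (fun x : ℝ => x ^ p) A :=
  cfc_nonneg fun _ hx => Real.rpow_nonneg (spectrum_nonneg_of_nonneg hA hx) p

lemma add_conj_rpow_nonneg {k : Type*} [Finite k] {C : Matrix k k 𝕜} (hC : 0 ≤ C)
    (H : Matrix m k 𝕜) {A : Matrix m m 𝕜} (hA : 0 ≤ A) (p : ℝ) :
    0 ≤ C + Hᴴ * cfc (fun x : ℝ => x ^ p) A * H :=
  add_nonneg hC ((cfc_rpow_nonneg hA p).posSemidef.conjTranspose_mul_mul_same H).nonneg

end Nonneg

variable [DecidableEq n]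

section Spectral

variable {A : Matrix m m 𝕜} {B : Matrix n n 𝕜} (hA : A.IsHermitian) (hB : B.IsHermitian)

/-- The coordinates `U* X V` of a rectangular matrix `X` in the orthonormal eigenbases of `A`
(the columns of `U`) and `B` (the columns of `V`). In these coordinates left multiplication by
`cfc f A` and right multiplication by `cfc g B` are both diagonal. -/
noncomputable def eigenCoord : Matrix m n 𝕜 ≃ₗ[𝕜] Matrix m n 𝕜 where
  toFun X := star (hA.eigenvectorUnitary : Matrix m m 𝕜) * X *
    (hB.eigenvectorUnitary : Matrix n n 𝕜)
  invFun X := (hA.eigenvectorUnitary : Matrix m m 𝕜) * X *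
    star (hB.eigenvectorUnitary : Matrix n n 𝕜)
  map_add' X Y := by rw [Matrix.mul_add, Matrix.add_mul]
  map_smul' c X := by simp only [Matrix.mul_smul, Matrix.smul_mul, RingHom.id_apply]
  left_inv X := by
    beta_reduce
    rw [Matrix.mul_assoc (star _), ← Matrix.mul_assoc,
      Unitary.mul_star_self_of_mem hA.eigenvectorUnitary.2, Matrix.one_mul, Matrix.mul_assoc,
      Unitary.mul_star_self_of_mem hB.eigenvectorUnitary.2, Matrix.mul_one]
  right_inv X := by
    beta_reduce
    rw [Matrix.mul_assoc _ X, ← Matrix.mul_assoc,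
      Unitary.star_mul_self_of_mem hA.eigenvectorUnitary.2, Matrix.one_mul, Matrix.mul_assoc,
      Unitary.star_mul_self_of_mem hB.eigenvectorUnitary.2, Matrix.mul_one]

lemma reTrace_conjTranspose_mul_cfc_mul_cfc (f g : ℝ → ℝ) (X : Matrix m n 𝕜) :
    reTrace (Xᴴ * cfc f A * X * cfc g B) =
      ∑ i, ∑ j, f (hA.eigenvalues i) * g (hB.eigenvalues j) * ‖eigenCoord hA hB X i j‖ ^ 2 := by
  rw [← reTrace_conjTranspose_mul_diagonal_mul_diagonal (fun i => f (hA.eigenvalues i))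
    (fun j => g (hB.eigenvalues j)), hA.cfc_eq, hB.cfc_eq, IsHermitian.cfc, IsHermitian.cfc,
    Unitary.conjStarAlgAut_apply, Unitary.conjStarAlgAut_apply, ← Matrix.mul_assoc,
    reTrace_mul_comm _ (star _)]
  simp only [eigenCoord, LinearEquiv.coe_mk, LinearMap.coe_mk, AddHom.coe_mk, conjTranspose_mul,
    conjTranspose_conjTranspose, star_eq_conjTranspose, Matrix.mul_assoc]
  rfl

lemma reTrace_conjTranspose_mul_cfc_mul_self (f : ℝ → ℝ) (X : Matrix m n 𝕜) :
    reTrace (Xᴴ * cfc f A * X) =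
      ∑ i, ∑ j, f (hA.eigenvalues i) * ‖eigenCoord hA hB X i j‖ ^ 2 := by
  have h := reTrace_conjTranspose_mul_cfc_mul_cfc hA hB f (fun _ => 1) X
  simpa only [cfc_const_one ℝ B hB.isSelfAdjoint, Matrix.mul_one, mul_one] using h

lemma reTrace_mul_cfc_mul_conjTranspose (g : ℝ → ℝ) (X : Matrix m n 𝕜) :
    reTrace (X * cfc g B * Xᴴ) =
      ∑ i, ∑ j, g (hB.eigenvalues j) * ‖eigenCoord hA hB X i j‖ ^ 2 := by
  have h := reTrace_conjTranspose_mul_cfc_mul_cfc hA hB (fun _ => 1) g X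
  rw [cfc_const_one ℝ A hA.isSelfAdjoint, Matrix.mul_one, Matrix.mul_assoc] at h
  rw [reTrace_mul_comm]
  simpa only [one_mul] using h

end Spectral

section Lieb

lemma parallelSumForm_cfc_eq_sum {A : Matrix m m 𝕜} {B : Matrix n n 𝕜} (hA : A.IsHermitian)
    (hB : B.IsHermitian) {f g : ℝ → ℝ} (hf : ∀ i, 0 ≤ f (hA.eigenvalues i))
    (hg : ∀ j, 0 ≤ g (hB.eigenvalues j)) (K : Matrix m n 𝕜) :
    parallelSumForm K (cfc f A) (cfc g B) =
      ∑ i, ∑ j, f (hA.eigenvalues i) * g (hB.eigenvalues j) /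
        (f (hA.eigenvalues i) + g (hB.eigenvalues j)) * ‖eigenCoord hA hB K i j‖ ^ 2 := by
  have hleast (i : m) (j : n) :=
    isLeast_range_mul_norm_sq_add_mul_norm_sub_sq (hf i) (hg j) (eigenCoord hA hB K i j)
  have hexpand (X : Matrix m n 𝕜) :
      reTrace (Xᴴ * cfc f A * X) + reTrace ((K - X) * cfc g B * (K - X)ᴴ) =
        ∑ i, ∑ j, (f (hA.eigenvalues i) * ‖eigenCoord hA hB X i j‖ ^ 2 +
          g (hB.eigenvalues j) * ‖eigenCoord hA hB K i j - eigenCoord hA hB X i j‖ ^ 2) := by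
    simp only [reTrace_conjTranspose_mul_cfc_mul_self hA hB,
      reTrace_mul_cfc_mul_conjTranspose hA hB, Finset.sum_add_distrib, map_sub, Matrix.sub_apply]
  simp only [parallelSumForm, hexpand]
  refine IsLeast.csInf_eq ⟨?_, ?_⟩
  · choose x hx using fun i j => (hleast i j).1
    refine ⟨(eigenCoord hA hB).symm (of x), ?_⟩
    simp only [LinearEquiv.apply_symm_apply, of_apply, hx]
  · rintro _ ⟨X, rfl⟩
    exact Finset.sum_le_sum fun i _ => Finset.sum_le_sum fun j _ => (hleast i j).2 ⟨_, rfl⟩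

lemma parallelSumForm_smul_left_eq_sum {A : Matrix m m 𝕜} {B : Matrix n n 𝕜} (hA : 0 ≤ A)
    (hB : 0 ≤ B) {t : ℝ} (ht : 0 ≤ t) (K : Matrix m n 𝕜) :
    parallelSumForm K (t • A) B =
      ∑ i, ∑ j, t * hA.posSemidef.1.eigenvalues i * hB.posSemidef.1.eigenvalues j /
        (t * hA.posSemidef.1.eigenvalues i + hB.posSemidef.1.eigenvalues j) *
          ‖eigenCoord hA.posSemidef.1 hB.posSemidef.1 K i j‖ ^ 2 := by
  have hform := parallelSumForm_cfc_eq_sum hA.posSemidef.1 hB.posSemidef.1 (f := (t * ·)) (g := id)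
    (fun i => mul_nonneg ht (hA.posSemidef.eigenvalues_nonneg i)) hB.posSemidef.eigenvalues_nonneg K
  rwa [cfc_const_mul_id t A, cfc_id ℝ B] at hform

open MeasureTheory in
lemma exists_measure_reTrace_rpow_mul_rpow_eq_integral {p : ℝ} (hp : p ∈ Set.Ioo (0 : ℝ) 1)
    (K : Matrix m n 𝕜) :
    ∃ μ : Measure ℝ, ∀ (A : Matrix m m 𝕜) (B : Matrix n n 𝕜), 0 ≤ A → 0 ≤ B →
      IntegrableOn (fun t => t ^ (p - 1) * parallelSumForm K (t⁻¹ • A) B) (Set.Ioi 0) μ ∧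
      reTrace (Kᴴ * cfc (fun x : ℝ => x ^ p) A * K * cfc (fun x : ℝ => x ^ (1 - p)) B) =
        ∫ t in Set.Ioi 0, t ^ (p - 1) * parallelSumForm K (t⁻¹ • A) B ∂μ := by
  obtain ⟨μ, hμ⟩ := exists_measure_rpow_mul_rpow_one_sub_eq_integral hp
  refine ⟨μ, fun A B hA hB => ?_⟩
  set a := hA.posSemidef.1.eigenvalues
  set b := hB.posSemidef.1.eigenvalues
  set w := fun i j => ‖eigenCoord hA.posSemidef.1 hB.posSemidef.1 K i j‖ ^ 2
  have hμab i j := hμ (a i) (b j) (hA.posSemidef.eigenvalues_nonneg i)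
    (hB.posSemidef.eigenvalues_nonneg j)
  have hintegrand : Set.EqOn
      (fun t => ∑ i, ∑ j, t ^ (p - 1) * (t⁻¹ * a i * b j / (t⁻¹ * a i + b j)) * w i j)
      (fun t => t ^ (p - 1) * parallelSumForm K (t⁻¹ • A) B) (Set.Ioi 0) := by
    intro t (ht : 0 < t)
    simp only [parallelSumForm_smul_left_eq_sum hA hB (inv_nonneg.2 ht.le), Finset.mul_sum,
      mul_assoc, a, b, w]
  have hint i j := (hμab i j).1.mul_const (w i j)
  refine ⟨IntegrableOn.congr_fun (integrable_finsetSum _ fun i _ =>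
    integrable_finsetSum _ fun j _ => hint i j) hintegrand measurableSet_Ioi, ?_⟩
  rw [← setIntegral_congr_fun measurableSet_Ioi hintegrand,
    integral_finsetSum _ fun i _ => integrable_finsetSum _ fun j _ => hint i j,
    reTrace_conjTranspose_mul_cfc_mul_cfc hA.posSemidef.1 hB.posSemidef.1]
  refine Finset.sum_congr rfl fun i _ => ?_
  rw [integral_finsetSum _ fun j _ => hint i j]
  refine Finset.sum_congr rfl fun j _ => ?_
  rw [integral_mul_const, ← (hμab i j).2]

lemma concaveOn_reTrace_rpow_mul_rpow (K : Matrix m n 𝕜) {p : ℝ} (hp : p ∈ Set.Icc (0 : ℝ) 1) :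
    ConcaveOn ℝ (Set.Ici (0 : Matrix m m 𝕜) ×ˢ Set.Ici (0 : Matrix n n 𝕜)) fun P =>
      reTrace (Kᴴ * cfc (fun x : ℝ => x ^ p) P.1 * K * cfc (fun x : ℝ => x ^ (1 - p)) P.2) := by
  have hconv : Convex ℝ (Set.Ici (0 : Matrix m m 𝕜) ×ˢ Set.Ici (0 : Matrix n n 𝕜)) :=
    (convex_Ici 0).prod (convex_Ici 0)
  rcases hp.1.eq_or_lt with rfl | hp₀
  · refine (concaveOn_reTrace_conj_add_reTrace_conj 0 K hconv).congr ?_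
    rintro ⟨A, B⟩ ⟨hA, hB⟩
    simp only [Real.rpow_zero, sub_zero, Real.rpow_one]
    rw [cfc_const_one ℝ A (LE.le.posSemidef hA).1.isSelfAdjoint,
      cfc_id' ℝ B (LE.le.posSemidef hB).1.isSelfAdjoint, Matrix.mul_one, Matrix.mul_assoc Kᴴ,
      reTrace_mul_comm Kᴴ]
    simp
  rcases hp.2.eq_or_lt with rfl | hp₁
  · refine (concaveOn_reTrace_conj_add_reTrace_conj K 0 hconv).congr ?_
    rintro ⟨A, B⟩ ⟨hA, hB⟩
    simp only [sub_self, Real.rpow_zero, Real.rpow_one]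
    rw [cfc_const_one ℝ B (LE.le.posSemidef hB).1.isSelfAdjoint,
      cfc_id' ℝ A (LE.le.posSemidef hA).1.isSelfAdjoint]
    simp
  obtain ⟨μ, hμ⟩ := exists_measure_reTrace_rpow_mul_rpow_eq_integral ⟨hp₀, hp₁⟩ K
  have hform (t : ℝ) (ht : 0 < t) :
      ConcaveOn ℝ (Set.Ici (0 : Matrix m m 𝕜) ×ˢ Set.Ici (0 : Matrix n n 𝕜)) fun P =>
        t ^ (p - 1) * parallelSumForm K (t⁻¹ • P.1) P.2 :=
    (concaveOn_parallelSumForm_smul_left K (inv_nonneg.2 ht.le)).smul (Real.rpow_nonneg ht.le _)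
  exact (MeasureTheory.integral_concaveOn_of_integrand_ae hconv
    (MeasureTheory.ae_restrict_of_forall_mem measurableSet_Ioi hform)
    fun P hP => (hμ P.1 P.2 hP.1 hP.2).1).congr fun P hP => (hμ P.1 P.2 hP.1 hP.2).2.symm

lemma concaveOn_reTrace_mul_rpow {C : Matrix n n 𝕜} (hC : 0 ≤ C) {p : ℝ}
    (hp : p ∈ Set.Icc (0 : ℝ) 1) :
    ConcaveOn ℝ (Set.Ici (0 : Matrix n n 𝕜)) fun B =>
      reTrace (C * cfc (fun x : ℝ => x ^ (1 - p)) B) := by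
  obtain ⟨K, rfl⟩ := CStarAlgebra.nonneg_iff_eq_star_mul_self.1 hC
  have hlieb := concaveOn_reTrace_rpow_mul_rpow K hp
  refine ⟨convex_Ici 0, fun A hA B hB a b ha hb hab => ?_⟩
  have h := hlieb.2 (x := (1, A)) ⟨PosSemidef.one.nonneg, hA⟩ (y := (1, B))
    ⟨PosSemidef.one.nonneg, hB⟩ ha hb hab
  have hone : cfc (fun x : ℝ => x ^ p) (1 : Matrix n n 𝕜) = 1 := by
    rw [cfc_apply_one, Real.one_rpow, map_one]
  simpa [← add_smul, hab, hone, star_eq_conjTranspose] using h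

end Lieb

section Epstein

lemma reTrace_cfc_mul_cfc_le {A B : Matrix n n 𝕜} (hA : A.IsHermitian) (hB : B.IsHermitian)
    {f g u v : ℝ → ℝ} (h : ∀ x ∈ spectrum ℝ A, ∀ y ∈ spectrum ℝ B, f x * g y ≤ u x + v y) :
    reTrace (cfc f A * cfc g B) ≤ reTrace (cfc u A) + reTrace (cfc v B) := by
  have hfg := reTrace_conjTranspose_mul_cfc_mul_cfc hA hB f g 1
  have hu := reTrace_conjTranspose_mul_cfc_mul_self hA hB u 1
  have hv := reTrace_mul_cfc_mul_conjTranspose hA hB v 1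
  simp only [conjTranspose_one, one_mul, mul_one] at hfg hu hv
  simp only [hfg, hu, hv, ← Finset.sum_add_distrib, ← add_mul]
  gcongr with i _ j
  exact h _ (hA.eigenvalues_mem_spectrum_real i) _ (hB.eigenvalues_mem_spectrum_real j)

lemma mul_cfc_rpow_one_sub_cfc_rpow_one_div {M : Matrix n n 𝕜} (hM : 0 ≤ M) {p : ℝ}
    (hp : 0 < p) :
    M * cfc (fun x : ℝ => x ^ (1 - p)) (cfc (fun x : ℝ => x ^ (1 / p)) M) =
      cfc (fun x : ℝ => x ^ (1 / p)) M := by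
  have hexp : 1 + 1 / p * (1 - p) = 1 / p := by
    field_simp
    ring
  have hfin : (spectrum ℝ M).Finite := Matrix.finite_real_spectrum
  calc M * cfc (fun x : ℝ => x ^ (1 - p)) (cfc (fun x : ℝ => x ^ (1 / p)) M)
      = cfc (fun x : ℝ => x) M * cfc (fun x : ℝ => (x ^ (1 / p)) ^ (1 - p)) M := by
        rw [cfc_id' ℝ M hM.posSemidef.1.isSelfAdjoint, ← cfc_comp' _ _ M
          ((hfin.image _).continuousOn _) (hfin.continuousOn _) hM.posSemidef.1.isSelfAdjoint]
    _ = cfc (fun x : ℝ => x * (x ^ (1 / p)) ^ (1 - p)) M :=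
        (cfc_mul _ _ M (hfin.continuousOn _) (hfin.continuousOn _)).symm
    _ = cfc (fun x : ℝ => x ^ (1 / p)) M := by
        refine cfc_congr fun x hx => ?_
        have hx₀ := spectrum_nonneg_of_nonneg hM hx
        rw [← Real.rpow_mul hx₀, ← Real.rpow_one_add' hx₀ (by rw [hexp]; positivity), hexp]

lemma reTrace_mul_rpow_one_sub_le {M B : Matrix n n 𝕜} (hM : 0 ≤ M) (hB : 0 ≤ B) {p : ℝ}
    (hp : p ∈ Set.Ioc (0 : ℝ) 1) :
    reTrace (M * cfc (fun x : ℝ => x ^ (1 - p)) B) ≤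
      p * reTrace (cfc (fun x : ℝ => x ^ (1 / p)) M) + (1 - p) * reTrace B := by
  have hyoung : ∀ x ∈ spectrum ℝ M, ∀ y ∈ spectrum ℝ B,
      x * y ^ (1 - p) ≤ p * x ^ (1 / p) + (1 - p) * y := by
    intro x hx y hy
    have hx₀ := spectrum_nonneg_of_nonneg hM hx
    have hy₀ := spectrum_nonneg_of_nonneg hB hy
    have h := Real.geom_mean_le_arith_mean2_weighted hp.1.le (sub_nonneg.2 hp.2)
      (Real.rpow_nonneg hx₀ (1 / p)) hy₀ (add_sub_cancel p 1)
    rwa [one_div, Real.rpow_inv_rpow hx₀ hp.1.ne', ← one_div] at h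
  have htrace := reTrace_cfc_mul_cfc_le hM.posSemidef.1 hB.posSemidef.1 hyoung
  rwa [cfc_id' ℝ M hM.posSemidef.1.isSelfAdjoint,
    cfc_const_mul _ _ M (finite_real_spectrum.continuousOn _), cfc_const_mul_id _ B,
    map_smul, map_smul] at htrace

lemma isGreatest_image_reTrace_mul_rpow_sub {M : Matrix n n 𝕜} (hM : 0 ≤ M) {p : ℝ}
    (hp : p ∈ Set.Ioc (0 : ℝ) 1) :
    IsGreatest ((fun B : Matrix n n 𝕜 =>
      reTrace (M * cfc (fun x : ℝ => x ^ (1 - p)) B) - (1 - p) * reTrace B) '' Set.Ici 0)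
      (p * reTrace (cfc (fun x : ℝ => x ^ (1 / p)) M)) := by
  constructor
  · refine ⟨cfc (fun x : ℝ => x ^ (1 / p)) M, ?_, ?_⟩
    · exact cfc_rpow_nonneg hM (1 / p)
    · simp only [mul_cfc_rpow_one_sub_cfc_rpow_one_div hM hp.1]
      ring
  · rintro _ ⟨B, hB : 0 ≤ B, rfl⟩
    exact sub_le_iff_le_add.2 (reTrace_mul_rpow_one_sub_le hM hB hp)

lemma concaveOn_reTrace_rpow_one_div {C : Matrix n n 𝕜} (hC : 0 ≤ C) (H : Matrix m n 𝕜) {p : ℝ}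
    (hp : p ∈ Set.Ioc (0 : ℝ) 1) :
    ConcaveOn ℝ (Set.Ici (0 : Matrix m m 𝕜)) fun A =>
      reTrace (cfc (fun x : ℝ => x ^ (1 / p)) (C + Hᴴ * cfc (fun x : ℝ => x ^ p) A * H)) := by
  have hp' : p ∈ Set.Icc (0 : ℝ) 1 := ⟨hp.1.le, hp.2⟩
  have hjoint : ConcaveOn ℝ (Set.Ici (0 : Matrix m m 𝕜) ×ˢ Set.Ici (0 : Matrix n n 𝕜)) fun P =>
      reTrace ((C + Hᴴ * cfc (fun x : ℝ => x ^ p) P.1 * H) * cfc (fun x : ℝ => x ^ (1 - p)) P.2) -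
        (1 - p) * reTrace P.2 := by
    have hconv : Convex ℝ (Set.Ici (0 : Matrix m m 𝕜) ×ˢ Set.Ici (0 : Matrix n n 𝕜)) :=
      (convex_Ici 0).prod (convex_Ici 0)
    have hleft := ((concaveOn_reTrace_mul_rpow hC hp').comp_linearMap
      (LinearMap.snd ℝ (Matrix m m 𝕜) (Matrix n n 𝕜))).subset (fun P hP => hP.2) hconv
    have hlinear := (((1 - p) • reTrace) ∘ₗ
      LinearMap.snd ℝ (Matrix m m 𝕜) (Matrix n n 𝕜)).convexOn hconv
    refine ((hleft.add (concaveOn_reTrace_rpow_mul_rpow H hp')).sub hlinear).congr fun P _ => ?_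
    simp [Matrix.add_mul]
  have hmax := concaveOn_of_isGreatest_image hjoint fun A hA =>
    isGreatest_image_reTrace_mul_rpow_sub (add_conj_rpow_nonneg hC H hA p) hp
  exact (hmax.smul (inv_nonneg.2 hp.1.le)).congr fun A _ => inv_mul_cancel_left₀ hp.1.ne' _

end Epstein

theorem stmt8_general {q : ℝ} (hq : q ∈ Set.Ioc (1 : ℝ) 2) {C : Matrix n n 𝕜} (hC : 0 ≤ C)
    (H : Matrix m n 𝕜) :
    ConcaveOn ℝ (Set.Ici (0 : Matrix m m 𝕜)) fun A => logq q (reTrace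
      (cfc (fun x : ℝ => x ^ (1 / (q - 1))) (C + Hᴴ * cfc (fun x : ℝ => x ^ (q - 1)) A * H))) := by
  have hp : q - 1 ∈ Set.Ioc (0 : ℝ) 1 := ⟨sub_pos.2 hq.1, by linarith [hq.2]⟩
  let φ (A : Matrix m m 𝕜) : ℝ := reTrace
    (cfc (fun x : ℝ => x ^ (1 / (q - 1))) (C + Hᴴ * cfc (fun x : ℝ => x ^ (q - 1)) A * H))
  have hφ : ConcaveOn ℝ (Set.Ici 0) φ := concaveOn_reTrace_rpow_one_div hC H hp
  have hφ₀ : Set.MapsTo φ (Set.Ici 0) (Set.Ici 0) := fun A hA =>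
    reTrace_nonneg (cfc_rpow_nonneg (add_conj_rpow_nonneg hC H hA _) _)
  refine ⟨convex_Ici 0, fun A hA B hB a b ha hb hab => ?_⟩
  calc a • logq q (φ A) + b • logq q (φ B)
      ≤ logq q (a • φ A + b • φ B) := (concaveOn_logq hq).2 (hφ₀ hA) (hφ₀ hB) ha hb hab
    _ ≤ logq q (φ (a • A + b • B)) :=
      monotoneOn_logq hq.1 (convex_Ici 0 (hφ₀ hA) (hφ₀ hB) ha hb hab)
        (hφ₀ (hφ.1 hA hB ha hb hab)) (hφ.2 hA hB ha hb hab)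

end Matrices

/-- Concavity of h_q(A) = log_q(φ_q(A)) for q ∈ (1,2] and positive definite L. -/
theorem stmt8 {n : ℕ} (q : ℝ) (hq : q ∈ Set.Ioc (1 : ℝ) 2)
    (H L : Matrix (Fin n) (Fin n) ℂ) (hH : (1 - Hᴴ * H).PosSemidef) (hL : L.PosDef)
    (A₁ A₂ : Matrix (Fin n) (Fin n) ℂ) (hA₁ : A₁.PosDef) (hA₂ : A₂.PosDef)
    (t : ℝ) (ht : t ∈ Set.Icc (0 : ℝ) 1) :
    logq q (phiq q H L (t • A₁ + (1 - t) • A₂))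
      ≥ t * logq q (phiq q H L A₁) + (1 - t) * logq q (phiq q H L A₂) := by
  have hC : 0 ≤ 1 - Hᴴ * H + (q - 1) • L :=
    add_nonneg hH.nonneg (smul_nonneg (sub_nonneg.2 hq.1.le) hL.posSemidef.nonneg)
  exact (stmt8_general hq hC H).2 hA₁.posSemidef.nonneg hA₂.posSemidef.nonneg ht.1
    (sub_nonneg.2 ht.2) (add_sub_cancel t 1)
end

section
/- Let q ∈ [2,3], let H be an n×n contraction (H*H ≤ I), and let L be an n×n positive definite matrix. Then the function h_q(A) = log_q(Tr[(I − H*H + (q−1)L + H* A^{q−1} H)^{1/(q−1)}]) is convex on n×n positive definite matrices A. -/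
open Matrix ComplexOrder

open MeasureTheory

/-!
Put `p = q - 1 ∈ [1, 2]` and `C = I - H*H + pL`. The variational formula
`(Tr X ^ (1/p)) ^ p = min {Tr (X Z ^ (1-p)) | Z > 0, Tr Z = 1}`, which is Jensen's inequality in the
eigenbases of `X` and `Z`, exhibits `φ_q(A) ^ p` as the minimum over `Z` of
`Tr (C Z ^ (1-p)) + Tr (H* A ^ p H Z ^ (1-p))`. By Ando's convexity theorem this is jointly convex
in `(A, Z)`, and partial minimization preserves convexity.

Ando's theorem follows from an integral representation of `x ^ p`, which reduces it to the functions
`a ^ 2 / (a + s b)` of the commuting operators `a = L_A` and `b = R_B`: their quadratic forms are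
maxima of linear functions of `(A, B)`, as one sees by completing the square.
-/

section Convexity

variable {E F : Type*} [AddCommGroup E] [Module ℝ E] [AddCommGroup F] [Module ℝ F]

lemma convexOn_of_forall_exists_linear_minorant {s : Set E} {f : E → ℝ} (hs : Convex ℝ s)
    (hf : ∀ x ∈ s, ∃ ℓ : E →ₗ[ℝ] ℝ, ℓ x = f x ∧ ∀ y ∈ s, ℓ y ≤ f y) : ConvexOn ℝ s f := by
  refine ⟨hs, fun x hx y hy a b ha hb hab => ?_⟩
  obtain ⟨ℓ, hℓ, hle⟩ := hf _ (hs hx hy ha hb hab)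
  rw [← hℓ, map_add, map_smul, map_smul]
  gcongr <;> exact hle _ ‹_›

lemma convexOn_of_isLeast_image {s : Set E} {u : Set F} {f : E → ℝ} {g : E × F → ℝ}
    (hg : ConvexOn ℝ (s ×ˢ u) g) (hs : Convex ℝ s)
    (hf : ∀ x ∈ s, IsLeast ((fun z => g (x, z)) '' u) (f x)) : ConvexOn ℝ s f := by
  refine ⟨hs, fun x hx y hy a b ha hb hab => ?_⟩
  obtain ⟨z, hz, hfx⟩ := (hf x hx).1
  obtain ⟨w, hw, hfy⟩ := (hf y hy).1
  have hxz : (x, z) ∈ s ×ˢ u := ⟨hx, hz⟩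
  have hyw : (y, w) ∈ s ×ˢ u := ⟨hy, hw⟩
  have hmem := hg.1 hxz hyw ha hb hab
  calc f (a • x + b • y) ≤ g (a • x + b • y, a • z + b • w) := (hf _ hmem.1).2 ⟨_, hmem.2, rfl⟩
    _ ≤ a • g (x, z) + b • g (y, w) := hg.2 hxz hyw ha hb hab
    _ = a • f x + b • f y := by rw [← hfx, ← hfy]

end Convexity

section RealPowers

lemma rpow_mul_rpow_one_sub {a b : ℝ} (ha : 0 ≤ a) (hb : 0 < b) (p : ℝ) :
    a ^ p * b ^ (1 - p) = b * (a / b) ^ p := by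
  rw [Real.div_rpow ha hb.le, Real.rpow_sub hb, Real.rpow_one]
  ring

lemma mul_rpowIntegrand₁₂_div {s a b : ℝ} (hs : 0 < s) (ha : 0 ≤ a) (hb : 0 < b) (p : ℝ) :
    b * Real.rpowIntegrand₁₂ p s (a / b) = s ^ (p - 2) * (a ^ 2 / (1 * a + s * b)) := by
  rw [Real.rpowIntegrand₁₂_eq_mul_rpowIntegrand₀₁ (div_nonneg ha hb.le) hs, Real.rpowIntegrand₀₁,
    show p - 1 = p - 2 + 1 by ring, Real.rpow_add_one hs.ne']
  field_simp
  ring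

lemma mul_rpow_one_sub_inv_mul_rpow {τ x p : ℝ} (hτ : 0 < τ) (hx : 0 < x) (hp : p ≠ 0) :
    x * (τ⁻¹ * x ^ (1 / p)) ^ (1 - p) = τ ^ (p - 1) * x ^ (1 / p) := by
  rw [Real.mul_rpow (by positivity) (by positivity), Real.inv_rpow hτ.le, ← Real.rpow_neg hτ.le,
    neg_sub, ← Real.rpow_mul hx.le, mul_left_comm, ← Real.rpow_one_add' hx.le]
  · congr 2
    field_simp
    ring
  · field_simp
    simpa using hp

end RealPowers

section Positivity

variable {𝕜 n : Type*} [RCLike 𝕜]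

lemma convex_setOf_posSemidef : Convex ℝ {A : Matrix n n 𝕜 | A.PosSemidef} :=
  fun _ hA _ hB _ _ ha hb _ => (hA.smul ha).add (hB.smul hb)

lemma convex_setOf_posDef : Convex ℝ {A : Matrix n n 𝕜 | A.PosDef} :=
  convex_iff_forall_pos.2 fun _ hA _ hB _ _ ha hb _ => (hA.smul ha).add (hB.smul hb)

variable [Fintype n]

lemma convex_setOf_posDef_and_re_trace_eq (r : ℝ) :
    Convex ℝ {A : Matrix n n 𝕜 | A.PosDef ∧ RCLike.re A.trace = r} :=
  convex_setOf_posDef.inter <| convex_hyperplane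
    (f := fun A : Matrix n n 𝕜 => RCLike.re A.trace)
    ⟨fun A B => by rw [trace_add, map_add],
      fun c A => by rw [trace_smul, RCLike.smul_re, smul_eq_mul]⟩ r

variable [DecidableEq n]

open scoped MatrixOrder in
lemma posSemidef_cfc {A : Matrix n n 𝕜} (hA : A.PosSemidef) {f : ℝ → ℝ}
    (hf : ∀ x, 0 ≤ x → 0 ≤ f x) : (cfc f A).PosSemidef :=
  (cfc_nonneg fun _ hx => hf _ (spectrum_nonneg_of_nonneg hA.nonneg hx)).posSemidef

open scoped MatrixOrder in
lemma posDef_cfc {A : Matrix n n 𝕜} (hA : A.PosDef) {f : ℝ → ℝ}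
    (hf : ∀ x, 0 < x → 0 < f x) : (cfc f A).PosDef :=
  ((cfc_isStrictlyPositive_iff f A (A.finite_real_spectrum.continuousOn f) hA.1.isSelfAdjoint).2
    fun _ hx => hf _ (hA.isStrictlyPositive.spectrum_pos hx)).posDef

end Positivity

section SpectralForm

variable {𝕜 m n : Type*} [RCLike 𝕜] [Fintype m] [Fintype n] [DecidableEq m] [DecidableEq n]
  {A : Matrix m m 𝕜} {B : Matrix n n 𝕜}

/-- The entries of `K` in the eigenbases of `A` (rows) and `B` (columns). -/
noncomputable def eigenCoords (hA : A.IsHermitian) (hB : B.IsHermitian) (K : Matrix m n 𝕜) :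
    Matrix m n 𝕜 :=
  star (hA.eigenvectorUnitary : Matrix m m 𝕜) * K * (hB.eigenvectorUnitary : Matrix n n 𝕜)

lemma eigenCoords_surjective (hA : A.IsHermitian) (hB : B.IsHermitian) :
    Function.Surjective (eigenCoords hA hB) := fun X => by
  let U : Matrix m m 𝕜 := hA.eigenvectorUnitary
  let V : Matrix n n 𝕜 := hB.eigenvectorUnitary
  have hU : star U * U = 1 := Unitary.coe_star_mul_self _
  have hV : star V * V = 1 := Unitary.coe_star_mul_self _
  exact ⟨U * X * star V, calc
    star U * (U * X * star V) * V = star U * U * X * (star V * V) := by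
      simp only [Matrix.mul_assoc]
    _ = X := by rw [hU, hV, Matrix.one_mul, Matrix.mul_one]⟩

lemma re_trace_conjTranspose_mul_cfc_mul_mul_cfc (hA : A.IsHermitian) (hB : B.IsHermitian)
    (X Y : Matrix m n 𝕜) (f g : ℝ → ℝ) :
    RCLike.re (Xᴴ * cfc f A * Y * cfc g B).trace =
      ∑ ij : m × n, RCLike.re (star (eigenCoords hA hB X ij.1 ij.2) *
        eigenCoords hA hB Y ij.1 ij.2) *
          (f (hA.eigenvalues ij.1) * g (hB.eigenvalues ij.2)) := by
  have hdiag : (Xᴴ * cfc f A * Y * cfc g B).trace =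
      ((eigenCoords hA hB X)ᴴ * diagonal (fun i => ((f (hA.eigenvalues i) : ℝ) : 𝕜)) *
        eigenCoords hA hB Y * diagonal fun j => ((g (hB.eigenvalues j) : ℝ) : 𝕜)).trace := by
    rw [hA.cfc_eq, hB.cfc_eq, IsHermitian.cfc, IsHermitian.cfc, Unitary.conjStarAlgAut_apply,
      Unitary.conjStarAlgAut_apply, ← Matrix.mul_assoc, ← Matrix.mul_assoc, trace_mul_comm]
    simp only [eigenCoords, conjTranspose_mul, star_eq_conjTranspose, conjTranspose_conjTranspose,
      Matrix.mul_assoc]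
    rfl
  rw [hdiag, Fintype.sum_prod_type_right, trace, map_sum]
  refine Finset.sum_congr rfl fun j _ => ?_
  rw [diag_apply, mul_diagonal, Matrix.mul_assoc, mul_apply, Finset.sum_mul, map_sum]
  refine Finset.sum_congr rfl fun i _ => ?_
  rw [diagonal_mul, conjTranspose_apply, mul_comm, RCLike.re_ofReal_mul, mul_left_comm,
    RCLike.re_ofReal_mul]
  ring

/-- The quadratic form at `K` of the function `f` of the commuting operators of left
multiplication by `A` and right multiplication by `B`, for Hermitian `A` and `B`; it is `0`
for other `A` and `B`. -/
noncomputable def spectralForm (f : ℝ → ℝ → ℝ) (K : Matrix m n 𝕜) (A : Matrix m m 𝕜)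
    (B : Matrix n n 𝕜) : ℝ :=
  open scoped Classical in
  if h : A.IsHermitian ∧ B.IsHermitian then
    ∑ ij : m × n, ‖eigenCoords h.1 h.2 K ij.1 ij.2‖ ^ 2 *
      f (h.1.eigenvalues ij.1) (h.2.eigenvalues ij.2)
  else 0

lemma spectralForm_eq_sum (hA : A.IsHermitian) (hB : B.IsHermitian) (f : ℝ → ℝ → ℝ)
    (K : Matrix m n 𝕜) :
    spectralForm f K A B = ∑ ij : m × n, ‖eigenCoords hA hB K ij.1 ij.2‖ ^ 2 *
      f (hA.eigenvalues ij.1) (hB.eigenvalues ij.2) :=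
  dif_pos ⟨hA, hB⟩

lemma re_trace_conjTranspose_mul_cfc_mul_self_mul_cfc (hA : A.IsHermitian) (hB : B.IsHermitian)
    (K : Matrix m n 𝕜) (f g : ℝ → ℝ) :
    RCLike.re (Kᴴ * cfc f A * K * cfc g B).trace = spectralForm (fun a b => f a * g b) K A B := by
  rw [re_trace_conjTranspose_mul_cfc_mul_mul_cfc hA hB, spectralForm_eq_sum hA hB]
  simp only [RCLike.star_def, RCLike.conj_mul, ← RCLike.ofReal_pow, RCLike.ofReal_re]

lemma spectralForm_congr (hA : A.PosSemidef) (hB : B.PosDef) {f g : ℝ → ℝ → ℝ}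
    (hfg : ∀ a b, 0 ≤ a → 0 < b → f a b = g a b) (K : Matrix m n 𝕜) :
    spectralForm f K A B = spectralForm g K A B := by
  simp only [spectralForm_eq_sum hA.1 hB.1,
    hfg _ _ (hA.eigenvalues_nonneg _) (hB.eigenvalues_pos _)]

lemma spectralForm_const_mul (c : ℝ) (f : ℝ → ℝ → ℝ) (K : Matrix m n 𝕜) (A : Matrix m m 𝕜)
    (B : Matrix n n 𝕜) :
    spectralForm (fun a b => c * f a b) K A B = c * spectralForm f K A B := by
  by_cases h : A.IsHermitian ∧ B.IsHermitian
  · simp only [spectralForm_eq_sum h.1 h.2, Finset.mul_sum, mul_left_comm]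
  · simp only [spectralForm, dif_neg h, mul_zero]

section Integral

variable {Ω : Type*} [MeasurableSpace Ω] {μ : Measure Ω} {f : Ω → ℝ → ℝ → ℝ}

lemma integrable_spectralForm (hA : A.PosSemidef) (hB : B.PosDef)
    (hf : ∀ a b, 0 ≤ a → 0 < b → Integrable (fun ω => f ω a b) μ) (K : Matrix m n 𝕜) :
    Integrable (fun ω => spectralForm (f ω) K A B) μ := by
  simp only [spectralForm_eq_sum hA.1 hB.1]
  exact integrable_finsetSum _ fun ij _ =>
    (hf _ _ (hA.eigenvalues_nonneg _) (hB.eigenvalues_pos _)).const_mul _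

lemma spectralForm_integral (hA : A.PosSemidef) (hB : B.PosDef)
    (hf : ∀ a b, 0 ≤ a → 0 < b → Integrable (fun ω => f ω a b) μ) (K : Matrix m n 𝕜) :
    spectralForm (fun a b => ∫ ω, f ω a b ∂μ) K A B = ∫ ω, spectralForm (f ω) K A B ∂μ := by
  simp only [spectralForm_eq_sum hA.1 hB.1]
  rw [integral_finsetSum _ fun ij _ =>
    (hf _ _ (hA.eigenvalues_nonneg _) (hB.eigenvalues_pos _)).const_mul _]
  simp only [integral_const_mul]

end Integral

end SpectralForm

section LinearMinorant

variable {𝕜 m n : Type*} [RCLike 𝕜] [Fintype m] [Fintype n]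

/-- The linear functions of `(A, B)` whose pointwise maximum over `X` is the spectral form at `K` of
`a ^ 2 / (α * a + β * b)`. -/
noncomputable def linearMinorant (α β : ℝ) (K X : Matrix m n 𝕜) :
    Matrix m m 𝕜 × Matrix n n 𝕜 →ₗ[ℝ] ℝ where
  toFun P := 2 * RCLike.re (Xᴴ * P.1 * K).trace - α * RCLike.re (Xᴴ * P.1 * X).trace -
    β * RCLike.re (Xᴴ * X * P.2).trace
  map_add' P Q := by
    simp only [Prod.fst_add, Prod.snd_add, Matrix.mul_add, Matrix.add_mul, trace_add, map_add]
    ring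
  map_smul' c P := by
    simp only [Prod.smul_fst, Prod.smul_snd, Matrix.mul_smul, Matrix.smul_mul, trace_smul,
      RCLike.smul_re, RingHom.id_apply, smul_eq_mul]
    ring

variable [DecidableEq m] [DecidableEq n] {A : Matrix m m 𝕜} {B : Matrix n n 𝕜}

lemma linearMinorant_eq_sum (hA : A.IsHermitian) (hB : B.IsHermitian) (α β : ℝ)
    (K X : Matrix m n 𝕜) :
    linearMinorant α β K X (A, B) = ∑ ij : m × n,
      (2 * RCLike.re (star (eigenCoords hA hB X ij.1 ij.2) * eigenCoords hA hB K ij.1 ij.2) *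
          hA.eigenvalues ij.1 -
        (α * hA.eigenvalues ij.1 + β * hB.eigenvalues ij.2) *
          ‖eigenCoords hA hB X ij.1 ij.2‖ ^ 2) := by
  have hXAK := re_trace_conjTranspose_mul_cfc_mul_mul_cfc hA hB X K (fun a => a) (fun _ => 1)
  have hXAX := re_trace_conjTranspose_mul_cfc_mul_self_mul_cfc hA hB X (fun a => a) (fun _ => 1)
  have hXXB := re_trace_conjTranspose_mul_cfc_mul_self_mul_cfc hA hB X (fun _ => 1) (fun b => b)
  rw [cfc_id' ℝ A hA.isSelfAdjoint, cfc_const_one ℝ B hB.isSelfAdjoint, Matrix.mul_one]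
    at hXAK hXAX
  rw [cfc_id' ℝ B hB.isSelfAdjoint, cfc_const_one ℝ A hA.isSelfAdjoint, Matrix.mul_one] at hXXB
  change 2 * _ - α * _ - β * _ = _
  rw [hXAK, hXAX, hXXB, spectralForm_eq_sum hA hB, spectralForm_eq_sum hA hB]
  simp only [Finset.mul_sum, ← Finset.sum_sub_distrib]
  exact Finset.sum_congr rfl fun ij _ => by ring

lemma linearMinorant_le_spectralForm (hA : A.PosSemidef) (hB : B.PosDef) {α β : ℝ} (hα : 0 ≤ α)
    (hβ : 0 < β) (K X : Matrix m n 𝕜) :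
    linearMinorant α β K X (A, B) ≤
      spectralForm (fun a b => a ^ 2 / (α * a + β * b)) K A B := by
  rw [linearMinorant_eq_sum hA.1 hB.1, spectralForm_eq_sum hA.1 hB.1]
  refine Finset.sum_le_sum fun ij _ => ?_
  have ha := hA.eigenvalues_nonneg ij.1
  have hb := hB.eigenvalues_pos ij.2
  set a := hA.1.eigenvalues ij.1
  set d := α * a + β * hB.1.eigenvalues ij.2
  set x := eigenCoords hA.1 hB.1 X ij.1 ij.2
  set w := eigenCoords hA.1 hB.1 K ij.1 ij.2
  have hd : 0 < d := by positivity
  calc 2 * RCLike.re (star x * w) * a - d * ‖x‖ ^ 2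
      ≤ 2 * (‖x‖ * ‖w‖) * a - d * ‖x‖ ^ 2 := by
        gcongr
        simpa using RCLike.re_le_norm (star x * w)
    _ ≤ ‖w‖ ^ 2 * (a ^ 2 / d) := by
        rw [← mul_div_assoc, le_div_iff₀ hd]
        nlinarith [sq_nonneg (‖w‖ * a - d * ‖x‖)]

lemma exists_linearMinorant_eq_spectralForm (hA : A.PosSemidef) (hB : B.PosDef) {α β : ℝ}
    (hα : 0 ≤ α) (hβ : 0 < β) (K : Matrix m n 𝕜) :
    ∃ X, linearMinorant α β K X (A, B) =
      spectralForm (fun a b => a ^ 2 / (α * a + β * b)) K A B := by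
  obtain ⟨X, hX⟩ := eigenCoords_surjective hA.1 hB.1 (Matrix.of fun i j =>
    ((hA.1.eigenvalues i / (α * hA.1.eigenvalues i + β * hB.1.eigenvalues j) : ℝ) : 𝕜) *
      eigenCoords hA.1 hB.1 K i j)
  refine ⟨X, ?_⟩
  rw [linearMinorant_eq_sum hA.1 hB.1, spectralForm_eq_sum hA.1 hB.1, hX]
  refine Finset.sum_congr rfl fun ij _ => ?_
  have ha := hA.eigenvalues_nonneg ij.1
  have hb := hB.eigenvalues_pos ij.2
  have hd : α * hA.1.eigenvalues ij.1 + β * hB.1.eigenvalues ij.2 ≠ 0 := by positivity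
  simp only [of_apply, RCLike.star_def, map_mul, RCLike.conj_ofReal, mul_assoc, norm_mul]
  rw [RCLike.re_ofReal_mul, RCLike.conj_mul, ← RCLike.ofReal_pow, RCLike.ofReal_re,
    RCLike.norm_ofReal, mul_pow, sq_abs]
  field_simp [hd]
  ring

end LinearMinorant

section JointConvexity

variable {𝕜 m n : Type*} [RCLike 𝕜] [Fintype m] [Fintype n] [DecidableEq m] [DecidableEq n]

lemma convexOn_spectralForm_sq_div {α β : ℝ} (hα : 0 ≤ α) (hβ : 0 < β) (K : Matrix m n 𝕜) :
    ConvexOn ℝ ({A | A.PosSemidef} ×ˢ {B | B.PosDef}) fun P =>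
      spectralForm (fun a b => a ^ 2 / (α * a + β * b)) K P.1 P.2 := by
  refine convexOn_of_forall_exists_linear_minorant
    (convex_setOf_posSemidef.prod convex_setOf_posDef) fun P hP => ?_
  obtain ⟨X, hX⟩ := exists_linearMinorant_eq_spectralForm hP.1 hP.2 hα hβ K
  exact ⟨linearMinorant α β K X, hX, fun Q hQ => linearMinorant_le_spectralForm hQ.1 hQ.2 hα hβ K X⟩

lemma convexOn_spectralForm_rpow_mul_rpow {p : ℝ} (hp : p ∈ Set.Ioo (1 : ℝ) 2)
    (K : Matrix m n 𝕜) :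
    ConvexOn ℝ ({A | A.PosSemidef} ×ˢ {B | B.PosDef}) fun P =>
      spectralForm (fun a b => a ^ p * b ^ (1 - p)) K P.1 P.2 := by
  obtain ⟨μ, hμ⟩ := Real.exists_measure_rpow_eq_integral_rpowIntegrand₁₂ hp
  have hint : ∀ a b : ℝ, 0 ≤ a → 0 < b →
      IntegrableOn (fun s => b * Real.rpowIntegrand₁₂ p s (a / b)) (Set.Ioi 0) μ :=
    fun a b ha hb => ((hμ _ (div_nonneg ha hb.le)).1).const_mul b
  have hconv : ConvexOn ℝ ({A | A.PosSemidef} ×ˢ {B | B.PosDef})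
      fun P : Matrix m m 𝕜 × Matrix n n 𝕜 => ∫ s in Set.Ioi 0,
        spectralForm (fun a b => b * Real.rpowIntegrand₁₂ p s (a / b)) K P.1 P.2 ∂μ := by
    refine integral_convexOn_of_integrand_ae
      (convex_setOf_posSemidef.prod convex_setOf_posDef) ?_
      fun P hP => integrable_spectralForm hP.1 hP.2 hint K
    filter_upwards [ae_restrict_mem measurableSet_Ioi] with s hs
    refine ((convexOn_spectralForm_sq_div zero_le_one hs K).smul
      (Real.rpow_nonneg hs.le (p - 2))).congr fun P hP => ?_
    simp only [smul_eq_mul, ← spectralForm_const_mul]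
    exact spectralForm_congr hP.1 hP.2
      (fun a b ha hb => (mul_rpowIntegrand₁₂_div hs ha hb p).symm) K
  refine hconv.congr fun P hP => ?_
  simp only [← spectralForm_integral hP.1 hP.2 hint]
  refine spectralForm_congr hP.1 hP.2 (fun a b ha hb => ?_) K
  rw [integral_const_mul, ← (hμ _ (div_nonneg ha hb.le)).2, rpow_mul_rpow_one_sub ha hb]

/-- **Ando's convexity theorem**, for exponents summing to one. -/
theorem convexOn_re_trace_rpow_mul_rpow {p : ℝ} (hp : p ∈ Set.Icc (1 : ℝ) 2)
    (K : Matrix m n 𝕜) :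
    ConvexOn ℝ ({A | A.PosSemidef} ×ˢ {B | B.PosDef}) fun P : Matrix m m 𝕜 × Matrix n n 𝕜 =>
      RCLike.re (Kᴴ * cfc (fun x : ℝ => x ^ p) P.1 * K *
        cfc (fun x : ℝ => x ^ (1 - p)) P.2).trace := by
  rcases hp.1.eq_or_lt with rfl | h₁
  · -- With these parameters the linear minorant is `re (tr (Kᴴ * A * K))` itself.
    refine ((linearMinorant 0 0 K ((1 / 2 : ℝ) • K)).convexOn
      (convex_setOf_posSemidef.prod convex_setOf_posDef)).congr fun P hP => ?_
    simp [linearMinorant, cfc_id' ℝ P.1 hP.1.1.isSelfAdjoint,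
      cfc_const_one ℝ P.2 hP.2.1.isSelfAdjoint, trace_smul, RCLike.smul_re]
  rcases hp.2.eq_or_lt with rfl | h₂
  · refine (convexOn_spectralForm_sq_div le_rfl one_pos K).congr fun P hP => ?_
    simp only [re_trace_conjTranspose_mul_cfc_mul_self_mul_cfc hP.1.1 hP.2.1]
    refine spectralForm_congr hP.1 hP.2 (fun a b _ _ => ?_) K
    norm_num [Real.rpow_neg_one, div_eq_mul_inv]
  · refine (convexOn_spectralForm_rpow_mul_rpow ⟨h₁, h₂⟩ K).congr fun P hP => ?_
    exact (re_trace_conjTranspose_mul_cfc_mul_self_mul_cfc hP.1.1 hP.2.1 K _ _).symm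

lemma convexOn_re_trace_mul_rpow {p : ℝ} (hp : p ∈ Set.Icc (1 : ℝ) 2) {C : Matrix n n 𝕜}
    (hC : C.PosSemidef) :
    ConvexOn ℝ {B | B.PosDef} fun B : Matrix n n 𝕜 =>
      RCLike.re (C * cfc (fun x : ℝ => x ^ (1 - p)) B).trace := by
  open scoped MatrixOrder in
  obtain ⟨K, rfl⟩ := CStarAlgebra.nonneg_iff_eq_star_mul_self.1 hC.nonneg
  refine ⟨convex_setOf_posDef, fun B₁ hB₁ B₂ hB₂ a b ha hb hab => ?_⟩
  have h := (convexOn_re_trace_rpow_mul_rpow hp K).2 (x := (1, B₁)) (y := (1, B₂))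
    ⟨PosSemidef.one, hB₁⟩ ⟨PosSemidef.one, hB₂⟩ ha hb hab
  have hone : cfc (fun x : ℝ => x ^ p) (1 : Matrix n n 𝕜) = 1 := by simp [cfc_apply_one]
  simpa [← add_smul, hab, hone, star_eq_conjTranspose] using h

end JointConvexity

section Variational

variable {𝕜 m n : Type*} [RCLike 𝕜] [Fintype m] [Fintype n] [DecidableEq m] [DecidableEq n]

lemma rpow_spectralForm_rpow_le {A : Matrix m m 𝕜} {B : Matrix n n 𝕜} (hA : A.PosSemidef)
    (hB : B.PosDef) {K : Matrix m n 𝕜} (hK : spectralForm (fun _ b => b) K A B = 1) {p : ℝ}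
    (hp : 1 ≤ p) :
    spectralForm (fun a _ => a ^ (1 / p)) K A B ^ p ≤
      spectralForm (fun a b => a * b ^ (1 - p)) K A B := by
  let a := hA.1.eigenvalues
  let b := hB.1.eigenvalues
  let w : m × n → ℝ := fun ij => ‖eigenCoords hA.1 hB.1 K ij.1 ij.2‖ ^ 2
  have ha : ∀ i, 0 ≤ a i := hA.eigenvalues_nonneg
  have hb : ∀ j, 0 < b j := hB.eigenvalues_pos
  rw [spectralForm_eq_sum hA.1 hB.1] at hK
  calc spectralForm (fun a _ => a ^ (1 / p)) K A B ^ p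
      = (∑ ij, w ij * b ij.2 * (a ij.1 ^ (1 / p) / b ij.2)) ^ p := by
        rw [spectralForm_eq_sum hA.1 hB.1]
        refine congrArg (· ^ p) (Finset.sum_congr rfl fun ij _ => ?_)
        rw [mul_assoc, mul_div_cancel₀ _ (hb ij.2).ne']
    _ ≤ ∑ ij, w ij * b ij.2 * (a ij.1 ^ (1 / p) / b ij.2) ^ p :=
        Real.rpow_arith_mean_le_arith_mean_rpow _ _ _
          (fun ij _ => mul_nonneg (sq_nonneg _) (hb ij.2).le) hK
          (fun ij _ => div_nonneg (Real.rpow_nonneg (ha ij.1) _) (hb ij.2).le) hp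
    _ = spectralForm (fun a b => a * b ^ (1 - p)) K A B := by
        rw [spectralForm_eq_sum hA.1 hB.1]
        refine Finset.sum_congr rfl fun ij _ => ?_
        rw [Real.div_rpow (Real.rpow_nonneg (ha ij.1) _) (hb ij.2).le, one_div,
          Real.rpow_inv_rpow (ha ij.1) (by positivity), mul_assoc, Real.rpow_sub (hb ij.2),
          Real.rpow_one, mul_div_left_comm]

variable {X Z : Matrix n n 𝕜}

lemma rpow_re_trace_rpow_le (hX : X.PosSemidef) (hZ : Z.PosDef)
    (hZ₁ : RCLike.re Z.trace = 1) {p : ℝ} (hp : 1 ≤ p) :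
    RCLike.re (cfc (fun x : ℝ => x ^ (1 / p)) X).trace ^ p ≤
      RCLike.re (X * cfc (fun x : ℝ => x ^ (1 - p)) Z).trace := by
  have hform := re_trace_conjTranspose_mul_cfc_mul_self_mul_cfc hX.1 hZ.1 (1 : Matrix n n 𝕜)
  have htr := hform (fun _ => 1) (fun b => b)
  have hroot := hform (fun a => a ^ (1 / p)) (fun _ => 1)
  have hmul := hform (fun a => a) (fun b => b ^ (1 - p))
  simp only [conjTranspose_one, one_mul, mul_one, cfc_const_one ℝ X hX.1.isSelfAdjoint,
    cfc_const_one ℝ Z hZ.1.isSelfAdjoint, cfc_id' ℝ X hX.1.isSelfAdjoint,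
    cfc_id' ℝ Z hZ.1.isSelfAdjoint] at htr hroot hmul
  rw [hroot, hmul]
  exact rpow_spectralForm_rpow_le hX hZ (htr.symm.trans hZ₁) hp

lemma mul_cfc_rpow_one_sub_inv_smul_cfc_rpow (hX : X.PosDef) {τ p : ℝ} (hτ : 0 < τ) (hp : p ≠ 0) :
    X * cfc (fun x : ℝ => x ^ (1 - p)) (τ⁻¹ • cfc (fun x : ℝ => x ^ (1 / p)) X) =
      τ ^ (p - 1) • cfc (fun x : ℝ => x ^ (1 / p)) X := by
  have hXsa := hX.1.isSelfAdjoint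
  have hcont (f : ℝ → ℝ) : ContinuousOn f (spectrum ℝ X) := X.finite_real_spectrum.continuousOn f
  have hcomp := cfc_comp' (fun x : ℝ => x ^ (1 - p)) (fun x => τ⁻¹ * x ^ (1 / p)) X
    ((X.finite_real_spectrum.image _).continuousOn _) (hcont _)
  rw [← cfc_const_mul _ _ X (hcont _), ← cfc_const_mul _ _ X (hcont _), ← hcomp]
  nth_rw 1 [← cfc_id' ℝ X]
  rw [← cfc_mul _ _ X (hcont _) (hcont _)]
  open scoped MatrixOrder in
  exact cfc_congr fun x hx =>
    mul_rpow_one_sub_inv_mul_rpow hτ (hX.isStrictlyPositive.spectrum_pos hx) hp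

theorem isLeast_re_trace_mul_rpow_one_sub [Nonempty n] (hX : X.PosDef) {p : ℝ} (hp : 1 ≤ p) :
    IsLeast ((fun Z => RCLike.re (X * cfc (fun x : ℝ => x ^ (1 - p)) Z).trace) ''
        {Z : Matrix n n 𝕜 | Z.PosDef ∧ RCLike.re Z.trace = 1})
      (RCLike.re (cfc (fun x : ℝ => x ^ (1 / p)) X).trace ^ p) := by
  have hroot : (cfc (fun x : ℝ => x ^ (1 / p)) X).PosDef :=
    posDef_cfc hX fun x hx => Real.rpow_pos_of_pos hx _
  set Y := cfc (fun x : ℝ => x ^ (1 / p)) X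
  set τ := RCLike.re Y.trace
  have hτ : 0 < τ := (RCLike.pos_iff.1 hroot.trace_pos).1
  constructor
  · refine ⟨τ⁻¹ • Y, ⟨hroot.smul (inv_pos.2 hτ), ?_⟩, ?_⟩
    · rw [trace_smul, RCLike.smul_re, inv_mul_cancel₀ hτ.ne']
    · simp only
      rw [mul_cfc_rpow_one_sub_inv_smul_cfc_rpow hX hτ (by positivity), trace_smul, RCLike.smul_re,
        Real.rpow_sub_one hτ.ne', div_mul_cancel₀ _ hτ.ne']
  · rintro _ ⟨Z, ⟨hZ, hZ₁⟩, rfl⟩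
    exact rpow_re_trace_rpow_le hX.posSemidef hZ hZ₁ hp

end Variational

section TraceFunctional

variable {𝕜 m n : Type*} [RCLike 𝕜] [Fintype m] [Fintype n] [DecidableEq m] [DecidableEq n]

lemma convexOn_re_trace_add_mul_rpow {p : ℝ} (hp : p ∈ Set.Icc (1 : ℝ) 2) (H : Matrix m n 𝕜)
    {C : Matrix n n 𝕜} (hC : C.PosSemidef) :
    ConvexOn ℝ ({A | A.PosSemidef} ×ˢ {Z | Z.PosDef}) fun P : Matrix m m 𝕜 × Matrix n n 𝕜 =>
      RCLike.re ((C + Hᴴ * cfc (fun x : ℝ => x ^ p) P.1 * H) *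
        cfc (fun x : ℝ => x ^ (1 - p)) P.2).trace := by
  simp only [Matrix.add_mul, trace_add, map_add]
  have hS := (convex_setOf_posSemidef (𝕜 := 𝕜) (n := m)).prod
    (convex_setOf_posDef (𝕜 := 𝕜) (n := n))
  exact (((convexOn_re_trace_mul_rpow hp hC).comp_linearMap (LinearMap.snd ℝ _ _)).subset
    (fun P hP => hP.2) hS).add (convexOn_re_trace_rpow_mul_rpow hp H)

theorem convexOn_rpow_re_trace_rpow_add {p : ℝ} (hp : p ∈ Set.Icc (1 : ℝ) 2) (H : Matrix m n 𝕜)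
    {C : Matrix n n 𝕜} (hC : C.PosDef) :
    ConvexOn ℝ {A : Matrix m m 𝕜 | A.PosSemidef} fun A =>
      RCLike.re (cfc (fun x : ℝ => x ^ (1 / p))
        (C + Hᴴ * cfc (fun x : ℝ => x ^ p) A * H)).trace ^ p := by
  cases isEmpty_or_nonempty n
  · simpa only [trace_eq_zero_of_isEmpty] using convexOn_const _ convex_setOf_posSemidef
  have hposDef (A : Matrix m m 𝕜) (hA : A.PosSemidef) :
      (C + Hᴴ * cfc (fun x : ℝ => x ^ p) A * H).PosDef :=
    hC.add_posSemidef
      ((posSemidef_cfc hA fun x hx => Real.rpow_nonneg hx p).conjTranspose_mul_mul_same H)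
  have hsub : {A : Matrix m m 𝕜 | A.PosSemidef} ×ˢ
      {Z : Matrix n n 𝕜 | Z.PosDef ∧ RCLike.re Z.trace = 1} ⊆
        {A | A.PosSemidef} ×ˢ {Z | Z.PosDef} := fun _ hP => ⟨hP.1, hP.2.1⟩
  have hconv := (convexOn_re_trace_add_mul_rpow hp H hC.posSemidef).subset hsub
    (convex_setOf_posSemidef.prod (convex_setOf_posDef_and_re_trace_eq 1))
  exact convexOn_of_isLeast_image hconv convex_setOf_posSemidef fun A hA =>
    isLeast_re_trace_mul_rpow_one_sub (hposDef A hA) hp.1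

end TraceFunctional

theorem stmt9_general {𝕜 m n : Type*} [RCLike 𝕜] [Fintype m] [Fintype n] [DecidableEq m]
    [DecidableEq n] {q : ℝ} (hq : q ∈ Set.Icc (2 : ℝ) 3) (H : Matrix m n 𝕜) {C : Matrix n n 𝕜}
    (hC : C.PosDef) :
    ConvexOn ℝ {A : Matrix m m 𝕜 | A.PosSemidef} fun A => logq q (RCLike.re
      (cfc (fun x : ℝ => x ^ (1 / (q - 1)))
        (C + Hᴴ * cfc (fun x : ℝ => x ^ (q - 1)) A * H)).trace) := by
  have hp : q - 1 ∈ Set.Icc (1 : ℝ) 2 := ⟨by linarith [hq.1], by linarith [hq.2]⟩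
  refine (((convexOn_rpow_re_trace_rpow_add hp H hC).sub
    (concaveOn_const 1 convex_setOf_posSemidef)).smul
      (inv_nonneg.2 (zero_le_one.trans hp.1))).congr fun A _ => ?_
  simp [logq, div_eq_inv_mul]

/-- Convexity of h_q(A) = log_q(φ_q(A)) for q ∈ [2,3] and positive definite L. -/
theorem stmt9 {n : ℕ} (q : ℝ) (hq : q ∈ Set.Icc (2 : ℝ) 3)
    (H L : Matrix (Fin n) (Fin n) ℂ) (hH : (1 - Hᴴ * H).PosSemidef) (hL : L.PosDef)
    (A₁ A₂ : Matrix (Fin n) (Fin n) ℂ) (hA₁ : A₁.PosDef) (hA₂ : A₂.PosDef)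
    (t : ℝ) (ht : t ∈ Set.Icc (0 : ℝ) 1) :
    logq q (phiq q H L (t • A₁ + (1 - t) • A₂))
      ≤ t * logq q (phiq q H L A₁) + (1 - t) * logq q (phiq q H L A₂) := by
  have hC := PosDef.posSemidef_add hH (hL.smul (show 0 < q - 1 by linarith [hq.1]))
  exact (stmt9_general hq H hC).2 hA₁.posSemidef hA₂.posSemidef ht.1 (sub_nonneg.2 ht.2) (by ring)
end
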